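/- arXiv:math/0101093 — 9 statements merged into one kernel-verified Lean document; each statement's English description precedes it below -/
import Mathlib

section
/- Let n ≥ 0 and let I be an ideal of the multivariate polynomial ring ℂ[x_0, ..., x_n] such that the quotient ℂ-algebra A = ℂ[x_0, ..., x_n]/I is nonzero and finite-dimensional as a ℂ-vector space. If z = (z_0, ..., z_n) ∈ ℂ^{n+1} is a common zero of I (i.e. g(z) = 0 for every g ∈ I), then for each i ∈ {0, ..., n} the scalar z_i is an eigenvalue of the ℂ-linear endomorphism of A given by multiplication by the image of x_i. -/
/-- Möller–Stetter, direct direction: for a zero-dimensional ideal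
`I ⊆ ℂ[x_0, …, x_n]` with nonzero finite-dimensional quotient algebra `A`,
every coordinate `z i` of a common zero `z` of `I` is an eigenvalue of the
multiplication-by-`x i` endomorphism of `A`. -/
theorem moeller_stetter_root_is_eigenvalue
    {n : ℕ} (I : Ideal (MvPolynomial (Fin (n + 1)) ℂ))
    [Nontrivial (MvPolynomial (Fin (n + 1)) ℂ ⧸ I)]
    [FiniteDimensional ℂ (MvPolynomial (Fin (n + 1)) ℂ ⧸ I)]
    (z : Fin (n + 1) → ℂ) (hz : ∀ g ∈ I, MvPolynomial.eval z g = 0)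
    (i : Fin (n + 1)) :
    Module.End.HasEigenvalue
      (LinearMap.mulLeft ℂ (Ideal.Quotient.mk I (MvPolynomial.X i)) :
        Module.End ℂ (MvPolynomial (Fin (n + 1)) ℂ ⧸ I)) (z i) := by
  -- Evaluation at `z` descends to a ring homomorphism on the quotient.
  let φ : (MvPolynomial (Fin (n + 1)) ℂ ⧸ I) →+* ℂ :=
    Ideal.Quotient.lift I (MvPolynomial.eval z) hz
  -- In finite dimension it suffices that `z i - x i` does not act invertibly. If it did, some `a`
  -- would satisfy `(z i - x i) * a = 1`, and applying `φ` would give `0 = 1`.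
  rw [Module.End.hasEigenvalue_iff_mem_spectrum, spectrum.mem_iff]
  intro hu
  obtain ⟨a, ha⟩ := ((Module.End.isUnit_iff _).mp hu).2 1
  have hφC : φ (algebraMap ℂ _ (z i)) = z i := MvPolynomial.eval_C (f := z) (z i)
  have hφX : φ (Ideal.Quotient.mk I (MvPolynomial.X i)) = z i := MvPolynomial.eval_X (f := z) i
  have hs : z i • a = algebraMap ℂ _ (z i) * a := Algebra.smul_def (z i) a
  have h := congrArg φ ha
  rw [LinearMap.sub_apply, Module.algebraMap_end_apply, LinearMap.mulLeft_apply,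
    hs, map_sub, map_mul, map_mul, hφC, hφX, sub_self, map_one] at h
  exact zero_ne_one h
end

section
/- Let n ≥ 0 and let I be an ideal of the multivariate polynomial ring ℂ[x_0, ..., x_n], with quotient ℂ-algebra A = ℂ[x_0, ..., x_n]/I. If v ∈ A is nonzero and λ = (λ_0, ..., λ_n) ∈ ℂ^{n+1} satisfies (image of x_i) · v = λ_i · v in A for every i ∈ {0, ..., n}, then λ is a common zero of I, i.e. g(λ) = 0 for every g ∈ I. -/
/-!
By induction on `g`, the quotient map sends every polynomial `g` to an element acting on the joint
eigenvector `v` as the scalar `g(lam)`. For `g ∈ I` the class of `g` is zero, so `g(lam) • v = 0`,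
and `v ≠ 0` forces `g(lam) = 0`.
-/

/-- Möller–Stetter, converse direction: if `v` is a nonzero joint eigenvector of the
multiplication-by-`x i` operators on `ℂ[x_0, …, x_n]/I` with joint eigenvalue tuple `lam`,
then `lam` is a common zero of `I`. -/
theorem moeller_stetter_joint_eigenvalue_is_root
    {n : ℕ} (I : Ideal (MvPolynomial (Fin (n + 1)) ℂ))
    (v : MvPolynomial (Fin (n + 1)) ℂ ⧸ I) (hv : v ≠ 0)
    (lam : Fin (n + 1) → ℂ)
    (hev : ∀ i : Fin (n + 1),
      Ideal.Quotient.mk I (MvPolynomial.X i) * v = lam i • v) :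
    ∀ g ∈ I, MvPolynomial.eval lam g = 0 := by
  have key : ∀ g : MvPolynomial (Fin (n + 1)) ℂ,
      Ideal.Quotient.mk I g * v = MvPolynomial.eval lam g • v := by
    intro g
    induction g using MvPolynomial.induction_on with
    | C a =>
      obtain ⟨w, rfl⟩ := Ideal.Quotient.mk_surjective v
      rw [MvPolynomial.eval_C, ← map_mul, MvPolynomial.C_mul']
      rfl
    | add p q hp hq => rw [map_add, map_add, add_mul, add_smul, hp, hq]
    | mul_X p i hp =>
      rw [map_mul, map_mul, MvPolynomial.eval_X, mul_assoc, hev, mul_smul_comm, hp, smul_smul,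
        mul_comm]
  intro g hg
  have h := key g
  rw [Ideal.Quotient.eq_zero_iff_mem.mpr hg, zero_mul] at h
  exact (smul_eq_zero.mp h.symm).resolve_right hv
end

section
/- Let n ≥ 1 and let I be a proper radical ideal of ℂ[x_0, ..., x_n] whose set V of common zeros in ℂ^{n+1} is finite and nonempty, and suppose I is in generic position with respect to x_n, i.e. distinct points of V have distinct x_n-coordinates. Then there exist univariate polynomials g_0, ..., g_n ∈ ℂ[t] such that g_n is squarefree of degree equal to the cardinality of V, each g_i for i < n has degree strictly less than the degree of g_n, and I is exactly the ideal generated by the polynomials x_0 − g_0(x_n), x_1 − g_1(x_n), ..., x_{n−1} − g_{n−1}(x_n), and g_n(x_n). -/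
/-!
The points of `V` have distinct last coordinates, so Lagrange interpolation at those coordinates
gives `g_i` with `g_i(z_n) = z_i` for all `z ∈ V`; and `g_n = ∏_{z ∈ V} (t - z_n)`.
By the Nullstellensatz (`MvPolynomial.vanishingIdeal_zeroLocus_eq_radical`) `I` consists of all
polynomials vanishing on `V`, hence contains the proposed generators. Conversely, modulo the
polynomials `x_i - g_i(x_n)` every `f ∈ I` is congruent to `h(x_n)` for a univariate `h`
(`sub_aeval_aeval_mem`); as `h` vanishes at every `z_n`, the product `g_n` divides it.
-/

/-- Substituting `x_i ↦ G i (x_j)` does not change a polynomial modulo an ideal containing all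
`x_i - G i (x_j)`. -/
theorem sub_aeval_aeval_mem {σ R : Type*} [CommRing R] (j : σ) (G : σ → Polynomial R)
    (J : Ideal (MvPolynomial σ R))
    (hJ : ∀ i, MvPolynomial.X i - Polynomial.aeval (MvPolynomial.X j : MvPolynomial σ R) (G i) ∈ J)
    (f : MvPolynomial σ R) :
    f - Polynomial.aeval (MvPolynomial.X j : MvPolynomial σ R) (MvPolynomial.aeval G f) ∈ J := by
  rw [← Ideal.Quotient.eq]
  -- Two algebra homomorphisms into the quotient that agree on the variables are equal.
  have h : Ideal.Quotient.mkₐ R J = ((Ideal.Quotient.mkₐ R J).comp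
      (Polynomial.aeval (MvPolynomial.X j : MvPolynomial σ R))).comp (MvPolynomial.aeval G) := by
    refine MvPolynomial.algHom_ext fun i => ?_
    simpa using Ideal.Quotient.eq.2 (hJ i)
  exact DFunLike.congr_fun h f

theorem eval_aeval_X {σ R : Type*} [CommRing R] (j : σ) (z : σ → R) (p : Polynomial R) :
    MvPolynomial.eval z (Polynomial.aeval (MvPolynomial.X j : MvPolynomial σ R) p) =
      p.eval (z j) := by
  have := Polynomial.aeval_algHom_apply (MvPolynomial.aeval z : MvPolynomial σ R →ₐ[R] R)
    (MvPolynomial.X j) p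
  simpa [MvPolynomial.aeval_eq_eval] using this.symm


/-- The polynomial `∏_{i ∈ s} (t - v i)` for distinct nodes `v i` is squarefree of degree `#s`,
vanishes at the nodes, and divides every polynomial vanishing there. -/
theorem exists_nodal {ι F : Type*} [Field F] (s : Finset ι) (v : ι → F) (hinj : Set.InjOn v s) :
    ∃ N : Polynomial F, Squarefree N ∧ N.natDegree = s.card ∧ (∀ i ∈ s, N.eval (v i) = 0) ∧
      ∀ p : Polynomial F, (∀ i ∈ s, p.eval (v i) = 0) → N ∣ p := by
  refine ⟨Lagrange.nodal s v, ?_, Lagrange.natDegree_nodal,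
    fun i hi => Lagrange.eval_nodal_at_node hi, fun p hp => ?_⟩
  · exact (Polynomial.separable_prod_X_sub_C_iff'.2
      (fun x hx y hy h => hinj hx hy h)).squarefree
  · refine Finset.prod_dvd_of_coprime ?_ fun z hz => Polynomial.dvd_iff_isRoot.2 (hp z hz)
    intro z hz w hw hzw
    exact Polynomial.isCoprime_X_sub_C_of_isUnit_sub
      (sub_ne_zero.2 fun h => hzw (hinj hz hw h)).isUnit

/-- Lagrange interpolation of a family `r` of value functions at common distinct nodes `v i`. -/
theorem exists_interpolation {ι κ F : Type*} [Field F] (s : Finset ι) (v : ι → F)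
    (hinj : Set.InjOn v s) (r : κ → ι → F) :
    ∃ L : κ → Polynomial F, (∀ k, (L k).degree < s.card) ∧
      ∀ k, ∀ i ∈ s, (L k).eval (v i) = r k i := by
  classical
  exact ⟨fun k => Lagrange.interpolate s v (r k), fun k => Lagrange.degree_interpolate_lt _ hinj,
    fun k i hi => Lagrange.eval_interpolate_at_node (r k) hinj hi⟩

/-- Gianni–Mora shape lemma: a proper radical zero-dimensional ideal of
`ℂ[x_0, …, x_n]` in generic position with respect to `x_n` is generated by
`x_0 - g_0(x_n), …, x_{n-1} - g_{n-1}(x_n)` and a squarefree univariate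
polynomial `g_n(x_n)` whose degree is the number of common zeros. -/
theorem gianni_mora_shape_lemma
    {n : ℕ} (hn : 1 ≤ n) (I : Ideal (MvPolynomial (Fin (n + 1)) ℂ))
    (hproper : I ≠ ⊤) (hrad : I.radical = I)
    (V : Set (Fin (n + 1) → ℂ))
    (hV : V = {z | ∀ g ∈ I, MvPolynomial.eval z g = 0})
    (hfin : V.Finite) (hne : V.Nonempty)
    (hgen : ∀ z ∈ V, ∀ w ∈ V, z (Fin.last n) = w (Fin.last n) → z = w) :
    ∃ g : Fin (n + 1) → Polynomial ℂ,
      Squarefree (g (Fin.last n)) ∧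
      (g (Fin.last n)).natDegree = V.ncard ∧
      (∀ i : Fin (n + 1), i ≠ Fin.last n →
        (g i).natDegree < (g (Fin.last n)).natDegree) ∧
      I = Ideal.span
        ({Polynomial.aeval (MvPolynomial.X (Fin.last n) : MvPolynomial (Fin (n + 1)) ℂ)
            (g (Fin.last n))} ∪
         {f : MvPolynomial (Fin (n + 1)) ℂ | ∃ i : Fin (n + 1), i ≠ Fin.last n ∧
            f = MvPolynomial.X i -
              Polynomial.aeval (MvPolynomial.X (Fin.last n) : MvPolynomial (Fin (n + 1)) ℂ)
                (g i)}) := by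
  have hI : ∀ f, f ∈ I ↔ ∀ z ∈ V, MvPolynomial.eval z f = 0 := by
    intro f
    rw [hV, ← hrad, ← MvPolynomial.vanishingIdeal_zeroLocus_eq_radical (K := ℂ) I,
      MvPolynomial.mem_vanishingIdeal_iff, MvPolynomial.vanishingIdeal_zeroLocus_eq_radical, hrad]
    simp only [MvPolynomial.mem_zeroLocus_iff, MvPolynomial.aeval_eq_eval, Set.mem_ofPred_eq]
  obtain ⟨S, rfl⟩ := hfin.exists_finset_coe
  clear hV
  set v : (Fin (n + 1) → ℂ) → ℂ := fun z => z (Fin.last n) with hv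
  have hinj : Set.InjOn v S := fun z hz w hw h => hgen z hz w hw h
  have hpos : 0 < S.card := Finset.card_pos.2 (by simpa using hne)
  obtain ⟨L, hLdeg, hLev⟩ : ∃ L : Fin (n + 1) → Polynomial ℂ,
      (∀ i, (L i).degree < S.card) ∧ ∀ i, ∀ z ∈ S, (L i).eval (z (Fin.last n)) = z i :=
    exists_interpolation S v hinj (fun i z => z i)
  obtain ⟨N, hNsq, hNdeg, hNev, hdvd⟩ := exists_nodal S v hinj
  refine ⟨fun i => if i = Fin.last n then N else L i, ?_, ?_, ?_, ?_⟩
  · simp only [if_true]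
    exact hNsq
  · simp [hNdeg]
  · intro i hi
    simp only [hi, if_true, if_false, hNdeg]
    by_cases h0 : L i = 0
    · simpa [h0] using hpos
    · exact (Polynomial.natDegree_lt_iff_degree_lt h0).2 (hLdeg i)
  · apply le_antisymm
    · intro f hf
      set J : Ideal (MvPolynomial (Fin (n + 1)) ℂ) := Ideal.span _
      obtain ⟨G, hG⟩ : ∃ G : Fin (n + 1) → Polynomial ℂ,
          G = fun i => if i = Fin.last n then Polynomial.X else L i := ⟨_, rfl⟩
      have hmem := sub_aeval_aeval_mem (Fin.last n) G J (by
        intro i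
        by_cases hi : i = Fin.last n
        · simp [hG, hi]
        · exact Ideal.subset_span (Or.inr ⟨i, hi, by simp [hG, hi]⟩)) f
      have hNJ : Polynomial.aeval (MvPolynomial.X (Fin.last n) : MvPolynomial (Fin (n + 1)) ℂ) N
          ∈ J := Ideal.subset_span (Or.inl (by simp))
      have hGev : ∀ z ∈ S, (MvPolynomial.aeval G f).eval (z (Fin.last n)) = 0 := by
        intro z hz
        -- Since `G i` takes the value `z_i` at `z_n`, the polynomial `f(G)` takes the value `f(z)`.
        have hcomp : ((Polynomial.aeval (z (Fin.last n)) : Polynomial ℂ →ₐ[ℂ] ℂ).comp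
            (MvPolynomial.aeval G)) = MvPolynomial.aeval z := by
          refine MvPolynomial.algHom_ext fun i => ?_
          by_cases hi : i = Fin.last n
          · simp [hG, hi]
          · simp [hG, hi, hLev i z hz]
        have := DFunLike.congr_fun hcomp f
        rw [MvPolynomial.aeval_eq_eval] at this
        simpa [Polynomial.coe_aeval_eq_eval] using this.trans ((hI f).1 hf z hz)
      obtain ⟨q, hq⟩ := hdvd _ hGev
      rw [hq, map_mul] at hmem
      exact (J.sub_mem_iff_left (J.mul_mem_right _ hNJ)).1 hmem
    · rw [Ideal.span_le]
      rintro f (hf | ⟨i, hi, rfl⟩)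
      · rw [Set.mem_singleton_iff.1 hf, SetLike.mem_coe, hI]
        intro z hz
        simp only [if_true, eval_aeval_X]
        exact hNev z hz
      · rw [SetLike.mem_coe, hI]
        intro z hz
        simp [hi, eval_aeval_X, hLev i z hz]
end

section
/- Let n ≥ 1 and let S be a finite subset of ℂ^n. Then there exist nonnegative integers c_0, ..., c_{n−1} such that the linear form z ↦ Σ_{i=0}^{n−1} c_i · z_i is injective on S. -/
/-!
The coefficients can be taken on the moment curve, `c i = k ^ i` for a suitable natural number `k`.
For distinct `z, w ∈ S`, the forms agree on `z` and `w` exactly when `k` is a root of the nonzero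
polynomial `∑ i, (z i - w i) X ^ i`, which happens for only finitely many `k`. As `S` has finitely
many pairs, some `k` avoids all of these roots.
-/

/-- A nonzero vector is orthogonal to only finitely many natural points of the moment curve. -/
lemma finite_setOf_sum_pow_mul_eq_zero {n : ℕ} {d : Fin n → ℂ} (hd : d ≠ 0) :
    {k : ℕ | ∑ i : Fin n, (k : ℂ) ^ (i : ℕ) * d i = 0}.Finite := by
  obtain ⟨j, hj⟩ := Function.ne_iff.mp hd
  let p : Polynomial ℂ := ∑ i, Polynomial.C (d i) * Polynomial.X ^ (i : ℕ)
  have hp : p ≠ 0 := by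
    intro h
    have hc := congrArg (fun q => Polynomial.coeff q (j : ℕ)) h
    simp [p, Polynomial.finsetSum_coeff, Polynomial.coeff_X_pow, Fin.val_inj] at hc
    exact hj hc
  refine ((Polynomial.finite_setOfPred_isRoot hp).preimage
    (Nat.cast_injective (R := ℂ)).injOn).subset fun k hk => ?_
  change Polynomial.eval (k : ℂ) p = 0
  refine Eq.trans ?_ hk
  rw [Polynomial.eval_finsetSum]
  refine Finset.sum_congr rfl fun i _ => ?_
  rw [Polynomial.eval_mul, Polynomial.eval_C, Polynomial.eval_pow, Polynomial.eval_X, mul_comm]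

/-- Existence of a generic linear form: for any finite subset `S` of `ℂ^n` there are
nonnegative integer coefficients `c_0, …, c_{n-1}` such that
`z ↦ ∑ i, c i * z i` is injective on `S`. -/
theorem exists_generic_linear_form
    {n : ℕ} (hn : 1 ≤ n) (S : Set (Fin n → ℂ)) (hS : S.Finite) :
    ∃ c : Fin n → ℕ,
      Set.InjOn (fun z : Fin n → ℂ => ∑ i, (c i : ℂ) * z i) S := by
  have hbad : (⋃ q ∈ S.offDiag,
      {k : ℕ | ∑ i : Fin n, (k : ℂ) ^ (i : ℕ) * (q.1 - q.2) i = 0}).Finite :=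
    hS.offDiag.biUnion fun q hq => finite_setOf_sum_pow_mul_eq_zero (sub_ne_zero.mpr hq.2.2)
  obtain ⟨k, hk⟩ := hbad.infinite_compl.nonempty
  refine ⟨fun i => k ^ (i : ℕ), fun z hz w hw h => ?_⟩
  by_contra hne
  refine hk (Set.mem_biUnion (x := (z, w)) ⟨hz, hw, hne⟩ ?_)
  simpa [mul_sub, Finset.sum_sub_distrib, sub_eq_zero] using h
end

section
/- Let D_0, ..., D_d be the adjacency matrices of an association scheme with d classes on X, with intersection numbers p_{ij}^k, and let I be the structure ideal. Then the kernel of the ℂ-algebra homomorphism ℂ[x_0, ..., x_d] → Matrix X X ℂ sending each variable x_i to D_i is exactly I; in particular the quotient ℂ[x_0, ..., x_d]/I is isomorphic as a ℂ-algebra to the Bose–Mesner algebra of the scheme. -/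
/-!
Modulo the structure ideal `I`, the relation `x₀ = 1` turns constants into multiples of `x₀`, and the
structure polynomials turn products of variables into linear forms, so every polynomial is congruent
to a linear form `∑ cₖ xₖ` (`exists_linearForm`). The generators of `I` vanish at the matrices `Dₖ`.
The `Dₖ` are nonzero 0/1 matrices with sum the all-ones matrix, so they have disjoint nonempty
supports and are linearly independent (`linearIndependent_of_zero_one`). Hence a polynomial in the
kernel is congruent modulo `I` to a linear form with all coefficients zero, i.e. it lies in `I`.
The same reduction shows that the image of the evaluation map, which is the algebra generated by
the `Dₖ`, is just their linear span.

Since `Matrix X X ℂ` is not commutative, `MvPolynomial.aeval` does not apply directly; the evaluation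
map is obtained through the commutative subalgebra generated by the `Dₖ` (`exists_evalHom`).
-/

open MvPolynomial in
/-- Every polynomial is congruent to a linear form modulo an ideal containing `x₀ - 1` and all
structure polynomials. -/
lemma exists_linearForm {d : ℕ} (p : Fin (d + 1) → Fin (d + 1) → Fin (d + 1) → ℕ)
    (I : Ideal (MvPolynomial (Fin (d + 1)) ℂ)) (h0 : X 0 - 1 ∈ I)
    (hmul : ∀ i j, X i * X j - ∑ k, (p i j k : ℂ) • X k ∈ I)
    (f : MvPolynomial (Fin (d + 1)) ℂ) :
    ∃ c : Fin (d + 1) → ℂ, f - ∑ k, c k • X k ∈ I := by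
  induction f using MvPolynomial.induction_on with
  | C a =>
    refine ⟨Pi.single 0 a, ?_⟩
    have h : ∑ k, (Pi.single 0 a : Fin (d + 1) → ℂ) k • (X k : MvPolynomial (Fin (d + 1)) ℂ)
        = a • X 0 := by
      rw [Finset.sum_eq_single 0] <;> simp +contextual
    rw [h, smul_eq_C_mul]
    convert I.mul_mem_left (-C a) h0 using 1
    ring
  | add f g hf hg =>
    obtain ⟨c, hc⟩ := hf
    obtain ⟨e, he⟩ := hg
    refine ⟨c + e, ?_⟩
    convert I.add_mem hc he using 1
    simp only [Pi.add_apply, add_smul, Finset.sum_add_distrib]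
    ring
  | mul_X f i hf =>
    obtain ⟨c, hc⟩ := hf
    refine ⟨fun k => ∑ j, c j * p j i k, ?_⟩
    have h2 : ∑ j, C (c j) * (X j * X i - ∑ k, (p j i k : ℂ) • X k) ∈ I :=
      I.sum_mem fun j _ => I.mul_mem_left _ (hmul j i)
    convert I.add_mem (I.mul_mem_right (X i) hc) h2 using 1
    have h3 : ∑ k, (∑ j, c j * (p j i k : ℂ)) • (X k : MvPolynomial (Fin (d + 1)) ℂ)
        = ∑ j, C (c j) * ∑ k, (p j i k : ℂ) • X k := by
      simp only [Finset.sum_smul, mul_smul, ← smul_eq_C_mul, Finset.smul_sum]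
      exact Finset.sum_comm
    rw [h3]
    simp only [mul_sub, sub_mul, Finset.sum_sub_distrib, Finset.sum_mul, smul_eq_C_mul, mul_assoc]
    ring

open scoped ComplexOrder in
/-- Nonzero 0/1 matrices summing to the all-ones matrix have disjoint supports, hence are linearly
independent. -/
lemma linearIndependent_of_zero_one {X ι : Type*} [Fintype ι] (D : ι → Matrix X X ℂ)
    (h01 : ∀ i x y, D i x y = 0 ∨ D i x y = 1) (hDne : ∀ i, D i ≠ 0)
    (hDsum : (∑ i, D i) = Matrix.of (fun _ _ => (1 : ℂ))) : LinearIndependent ℂ D := by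
  classical
  rw [Fintype.linearIndependent_iff]
  intro c hc i
  obtain ⟨x, y, hxy⟩ : ∃ x y, D i x y ≠ 0 := by
    by_contra! h
    exact hDne i (Matrix.ext h)
  have h1 : D i x y = 1 := (h01 i x y).resolve_left hxy
  have hs : ∑ j, D j x y = 1 := by
    simpa [Matrix.sum_apply] using congrFun (congrFun hDsum x) y
  rw [← Finset.add_sum_erase _ _ (Finset.mem_univ i), h1, add_eq_left,
    Finset.sum_eq_zero_iff_of_nonneg fun j _ => by rcases h01 j x y with h | h <;> simp [h]] at hs
  have hz : ∑ j, c j * D j x y = 0 := by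
    simpa [Matrix.sum_apply] using congrFun (congrFun hc x) y
  rwa [Finset.sum_eq_single i (fun j _ hj => by rw [hs j (by simp [hj]), mul_zero]) (by simp),
    h1, mul_one] at hz

/-- Evaluation of polynomials at a pairwise commuting family in a possibly noncommutative
algebra. -/
lemma exists_evalHom {A ι : Type*} [Ring A] [Algebra ℂ A] (D : ι → A)
    (hcomm : ∀ i j, D i * D j = D j * D i) :
    ∃ φ : MvPolynomial ι ℂ →ₐ[ℂ] A, ∀ i, φ (MvPolynomial.X i) = D i := by
  let _ : CommRing (Algebra.adjoin ℂ (Set.range D)) := Algebra.adjoinCommRingOfComm ℂ (by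
    rintro _ ⟨i, rfl⟩ _ ⟨j, rfl⟩
    exact hcomm i j)
  let ψ : MvPolynomial ι ℂ →ₐ[ℂ] Algebra.adjoin ℂ (Set.range D) :=
    MvPolynomial.aeval fun i => ⟨D i, Algebra.subset_adjoin ⟨i, rfl⟩⟩
  refine ⟨(Algebra.adjoin ℂ (Set.range D)).val.comp ψ, fun i => ?_⟩
  simp [ψ]

/-- The kernel of the ℂ-algebra homomorphism `ℂ[x_0, …, x_d] → Matrix X X ℂ`
sending each variable `x i` to `D i` is exactly the structure ideal `I`;
in particular `ℂ[x_0, …, x_d]/I` is isomorphic as a ℂ-algebra to the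
Bose–Mesner algebra, the ℂ-linear span of the `D i`. -/
theorem assocScheme_structureIdeal_eq_ker_aeval
    {X : Type*} [Fintype X] [Nonempty X] [DecidableEq X]
    {d : ℕ} (hd : 1 ≤ d)
    (D : Fin (d + 1) → Matrix X X ℂ)
    (p : Fin (d + 1) → Fin (d + 1) → Fin (d + 1) → ℕ)
    (h01 : ∀ i x y, D i x y = 0 ∨ D i x y = 1)
    (hDne : ∀ i, D i ≠ 0)
    (hD0 : D 0 = 1)
    (hDsum : (∑ i, D i) = Matrix.of (fun _ _ => (1 : ℂ)))
    (hDsym : ∀ i, (D i).IsSymm)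
    (hpsym : ∀ i j k, p i j k = p j i k)
    (hDmul : ∀ i j, D i * D j = ∑ k, (p i j k : ℂ) • D k)
    (I : Ideal (MvPolynomial (Fin (d + 1)) ℂ))
    (hI : I = Ideal.span
      ({MvPolynomial.X 0 - 1} ∪
       {f : MvPolynomial (Fin (d + 1)) ℂ | ∃ i j : Fin (d + 1), i ≤ j ∧
          f = MvPolynomial.X i * MvPolynomial.X j -
            ∑ k, (p i j k : ℂ) • MvPolynomial.X k})) :
    (∀ φ : MvPolynomial (Fin (d + 1)) ℂ →ₐ[ℂ] Matrix X X ℂ,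
      (∀ i, φ (MvPolynomial.X i) = D i) → RingHom.ker φ = I) ∧
    Subalgebra.toSubmodule (Algebra.adjoin ℂ (Set.range D)) =
      Submodule.span ℂ (Set.range D) ∧
    Nonempty ((MvPolynomial (Fin (d + 1)) ℂ ⧸ I) ≃ₐ[ℂ]
      Algebra.adjoin ℂ (Set.range D)) := by
  have hX0 : MvPolynomial.X 0 - 1 ∈ I := hI ▸ Ideal.subset_span (Or.inl rfl)
  have hXX : ∀ i j, MvPolynomial.X i * MvPolynomial.X j -
      ∑ k, (p i j k : ℂ) • MvPolynomial.X k ∈ I := by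
    intro i j
    rcases le_total i j with h | h
    · exact hI ▸ Ideal.subset_span (Or.inr ⟨i, j, h, rfl⟩)
    · simp only [hpsym i j, mul_comm (MvPolynomial.X i)]
      exact hI ▸ Ideal.subset_span (Or.inr ⟨j, i, h, rfl⟩)
  have hlin := linearIndependent_of_zero_one D h01 hDne hDsum
  have hle : ∀ φ : MvPolynomial (Fin (d + 1)) ℂ →ₐ[ℂ] Matrix X X ℂ,
      (∀ i, φ (MvPolynomial.X i) = D i) → I ≤ RingHom.ker φ := by
    intro φ hφ
    rw [hI, Ideal.span_le]
    rintro f (rfl | ⟨i, j, -, rfl⟩)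
    · simp [RingHom.mem_ker, hφ, hD0]
    · simp [RingHom.mem_ker, hφ, hDmul]
  have hred : ∀ φ : MvPolynomial (Fin (d + 1)) ℂ →ₐ[ℂ] Matrix X X ℂ,
      (∀ i, φ (MvPolynomial.X i) = D i) → ∀ f, ∃ c : Fin (d + 1) → ℂ,
        f - ∑ k, c k • MvPolynomial.X k ∈ I ∧ φ f = ∑ k, c k • D k := by
    intro φ hφ f
    obtain ⟨c, hc⟩ := exists_linearForm p I hX0 hXX f
    refine ⟨c, hc, ?_⟩
    have h := hle φ hφ hc
    rw [RingHom.mem_ker, map_sub, sub_eq_zero] at h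
    simpa [hφ] using h
  have hker : ∀ φ : MvPolynomial (Fin (d + 1)) ℂ →ₐ[ℂ] Matrix X X ℂ,
      (∀ i, φ (MvPolynomial.X i) = D i) → RingHom.ker φ = I := by
    intro φ hφ
    refine le_antisymm (fun f hf => ?_) (hle φ hφ)
    obtain ⟨c, hc, hfc⟩ := hred φ hφ f
    rw [RingHom.mem_ker] at hf
    have hc0 := Fintype.linearIndependent_iff.mp hlin c (hfc.symm.trans hf)
    simpa [hc0] using hc
  obtain ⟨φ, hφ⟩ := exists_evalHom D fun i j => by simp only [hDmul, hpsym i j]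
  have hrange : φ.range = Algebra.adjoin ℂ (Set.range D) := by
    rw [← Algebra.map_top, ← MvPolynomial.adjoin_range_X, AlgHom.map_adjoin, ← Set.range_comp]
    congr 2
    exact funext hφ
  refine ⟨hker, le_antisymm ?_ (Algebra.span_le_adjoin ℂ _), ?_⟩
  · rw [← hrange]
    rintro _ ⟨f, rfl⟩
    obtain ⟨c, -, hfc⟩ := hred φ hφ f
    change φ f ∈ _
    rw [hfc]
    exact Submodule.sum_mem _ fun k _ =>
      Submodule.smul_mem _ _ (Submodule.subset_span ⟨k, rfl⟩)
  · rw [← hrange, ← hker φ hφ]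
    exact ⟨Ideal.quotientKerEquivRange φ⟩
end

section
/- Let D_0, ..., D_d be the adjacency matrices of an association scheme with d classes on X, with intersection numbers p_{ij}^k. Then the structure ideal I of the scheme is a radical ideal of ℂ[x_0, ..., x_d]. -/
/-!
The matrices `D i` commute, so `x_i ↦ D_i` extends to an algebra homomorphism `φ` from the polynomial
ring onto the Bose–Mesner algebra, and `φ` kills the structure ideal `I`. Conversely, modulo `I` every
polynomial is a linear form `∑ c_k x_k` (`exists_linear_sub_mem`), and the `D_k` are linearly
independent because they are nonzero with disjoint supports (`coeff_eq_zero_of_sum_smul_eq_zero`);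
hence `I = ker φ`. The image of `φ` consists of combinations of commuting real symmetric matrices,
which are normal, and a normal matrix with square zero is zero (`eq_zero_of_normal_of_mul_self`).
Therefore `f ^ 2 ∈ I` implies `f ∈ I`, which is radicality.
-/

open Matrix ComplexOrder in
theorem eq_zero_of_normal_of_mul_self {X : Type*} [Fintype X] {M : Matrix X X ℂ}
    (hN : Mᴴ * M = M * Mᴴ) (h : M * M = 0) : M = 0 := by
  rw [← conjTranspose_mul_self_eq_zero, ← conjTranspose_mul_self_eq_zero]
  -- The Hermitian matrix `Mᴴ * M` has square `Mᴴ * Mᴴ * (M * M)` by normality.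
  calc (Mᴴ * M)ᴴ * (Mᴴ * M) = Mᴴ * (M * Mᴴ) * M := by
        simp only [conjTranspose_mul, conjTranspose_conjTranspose, Matrix.mul_assoc]
    _ = Mᴴ * Mᴴ * (M * M) := by rw [← hN]; simp only [Matrix.mul_assoc]
    _ = 0 := by rw [h, Matrix.mul_zero]

/-- The relation matrices are linearly independent: being 0/1 matrices that sum to `J`, they have
disjoint supports. -/
theorem coeff_eq_zero_of_sum_smul_eq_zero {X ι : Type*} [Fintype ι]
    (D : ι → Matrix X X ℂ)
    (h01 : ∀ i x y, D i x y = 0 ∨ D i x y = 1)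
    (hDne : ∀ i, D i ≠ 0)
    (hDsum : (∑ i, D i) = Matrix.of (fun _ _ => (1 : ℂ)))
    (c : ι → ℂ) (hc : ∑ k, c k • D k = 0) (i : ι) : c i = 0 := by
  classical
  obtain ⟨x, y, hxy⟩ : ∃ x y, D i x y = 1 := by
    by_contra! h
    exact hDne i (by ext x y; exact (h01 i x y).resolve_right (h x y))
  have hsum : ∑ j, D j x y = 1 := by
    simpa [Matrix.sum_apply] using congrFun (congrFun hDsum x) y
  rw [← Finset.add_sum_erase _ _ (Finset.mem_univ i), hxy] at hsum
  have hre : ∑ j ∈ Finset.univ.erase i, (D j x y).re = 0 := by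
    rw [← Complex.re_sum, add_eq_left.mp hsum, Complex.zero_re]
  rw [Finset.sum_eq_zero_iff_of_nonneg
    (fun j _ => by rcases h01 j x y with h | h <;> simp [h])] at hre
  have hz : ∀ j, j ≠ i → D j x y = 0 := fun j hj =>
    (h01 j x y).resolve_right fun h => by simpa [h] using hre j (by simpa using hj)
  have := congrFun (congrFun hc x) y
  rw [Matrix.sum_apply, Finset.sum_eq_single i (by intro j _ hj; simp [hz j hj]) (by simp)] at this
  simpa [hxy] using this

/-- Modulo `I` a linear form times a variable is again a linear form, so every polynomial
is congruent to a linear form as soon as the constant `1` is. -/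
theorem exists_linear_sub_mem {R ι : Type*} [CommRing R] [Fintype ι] [DecidableEq ι]
    (e : ι) (p : ι → ι → ι → R) (I : Ideal (MvPolynomial ι R))
    (hone : MvPolynomial.X e - 1 ∈ I)
    (hmul : ∀ i j, MvPolynomial.X i * MvPolynomial.X j - ∑ k, p i j k • MvPolynomial.X k ∈ I)
    (f : MvPolynomial ι R) :
    ∃ c : ι → R, f - ∑ k, c k • MvPolynomial.X k ∈ I := by
  induction f using MvPolynomial.induction_on with
  | C a =>
    refine ⟨Pi.single e a, ?_⟩
    have h := I.mul_mem_left (-MvPolynomial.C a) hone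
    rw [Finset.sum_eq_single e (by intro j _ hj; simp [hj]) (by simp)]
    convert h using 1
    simp [MvPolynomial.smul_eq_C_mul]
    ring
  | add f g hf hg =>
    obtain ⟨c, hc⟩ := hf
    obtain ⟨c', hc'⟩ := hg
    refine ⟨c + c', ?_⟩
    convert I.add_mem hc hc' using 1
    simp only [Pi.add_apply, add_smul, Finset.sum_add_distrib]
    ring
  | mul_X f n hf =>
    obtain ⟨c, hc⟩ := hf
    refine ⟨fun k => ∑ j, c j * p j n k, ?_⟩
    have h2 : ∑ j, c j • (MvPolynomial.X j * MvPolynomial.X n - ∑ k, p j n k • MvPolynomial.X k)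
        ∈ I := I.sum_mem fun j _ => by
      rw [MvPolynomial.smul_eq_C_mul]; exact I.mul_mem_left _ (hmul j n)
    convert I.add_mem (I.mul_mem_right (MvPolynomial.X n) hc) h2 using 1
    simp only [smul_sub, Finset.sum_sub_distrib, sub_mul, Finset.sum_mul, smul_mul_assoc,
      Finset.smul_sum, Finset.sum_smul, smul_smul]
    rw [Finset.sum_comm]
    ring

/-- The structure ideal of an association scheme is a radical ideal. -/
theorem assocScheme_structureIdeal_radical
    {X : Type*} [Fintype X] [Nonempty X] [DecidableEq X]
    {d : ℕ} (hd : 1 ≤ d)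
    (D : Fin (d + 1) → Matrix X X ℂ)
    (p : Fin (d + 1) → Fin (d + 1) → Fin (d + 1) → ℕ)
    (h01 : ∀ i x y, D i x y = 0 ∨ D i x y = 1)
    (hDne : ∀ i, D i ≠ 0)
    (hD0 : D 0 = 1)
    (hDsum : (∑ i, D i) = Matrix.of (fun _ _ => (1 : ℂ)))
    (hDsym : ∀ i, (D i).IsSymm)
    (hpsym : ∀ i j k, p i j k = p j i k)
    (hDmul : ∀ i j, D i * D j = ∑ k, (p i j k : ℂ) • D k)
    (I : Ideal (MvPolynomial (Fin (d + 1)) ℂ))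
    (hI : I = Ideal.span
      ({MvPolynomial.X 0 - 1} ∪
       {f : MvPolynomial (Fin (d + 1)) ℂ | ∃ i j : Fin (d + 1), i ≤ j ∧
          f = MvPolynomial.X i * MvPolynomial.X j -
            ∑ k, (p i j k : ℂ) • MvPolynomial.X k})) :
    I.radical = I := by
  classical
  have hcomm (i j) : D i * D j = D j * D i := by
    rw [hDmul, hDmul]; exact Finset.sum_congr rfl fun k _ => by rw [hpsym]
  have hA : IsMulCommutative (Algebra.adjoin ℂ (Set.range D)) :=
    Algebra.isMulCommutative_adjoin ℂ (by rintro _ ⟨i, rfl⟩ _ ⟨j, rfl⟩; exact hcomm i j)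
  -- `MvPolynomial.aeval` needs a commutative target, so it takes values in the subalgebra generated
  -- by the `D i` and is then composed with the inclusion.
  obtain ⟨φ, hφX⟩ : ∃ φ : MvPolynomial (Fin (d + 1)) ℂ →ₐ[ℂ] Matrix X X ℂ,
      ∀ i, φ (MvPolynomial.X i) = D i := by
    open scoped IsMulCommutative in
    exact ⟨(Algebra.adjoin ℂ (Set.range D)).val.comp (MvPolynomial.aeval fun i =>
      (⟨D i, Algebra.subset_adjoin ⟨i, rfl⟩⟩ : Algebra.adjoin ℂ (Set.range D))),
      fun i => by simp⟩
  have hone : MvPolynomial.X 0 - 1 ∈ I := hI ▸ Ideal.subset_span (Or.inl rfl)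
  have hmul (i j) : MvPolynomial.X i * MvPolynomial.X j -
      ∑ k, (p i j k : ℂ) • MvPolynomial.X k ∈ I := by
    rw [hI]
    rcases le_total i j with h | h
    · exact Ideal.subset_span (Or.inr ⟨i, j, h, rfl⟩)
    · refine Ideal.subset_span (Or.inr ⟨j, i, h, ?_⟩)
      rw [mul_comm]
      simp only [hpsym i j]
  have hker : I ≤ RingHom.ker φ := by
    rw [hI, Ideal.span_le]
    rintro f (rfl | ⟨i, j, -, rfl⟩)
    · simp [hφX, hD0]
    · simp [hφX, hDmul]
  have hsym (i) : (D i).conjTranspose = D i := by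
    ext x y
    rw [Matrix.conjTranspose_apply, (hDsym i).apply]
    rcases h01 i x y with h | h <;> simp [h]
  rw [Ideal.radical_eq_iff, Ideal.isRadical_iff_pow_one_lt 2 one_lt_two]
  intro f hf
  obtain ⟨c, hc⟩ := exists_linear_sub_mem 0 (fun i j k => (p i j k : ℂ)) I hone hmul f
  have hφf : φ f = ∑ k, c k • D k := by
    simpa [hφX, sub_eq_zero] using hker hc
  have hsq : φ f * φ f = 0 := by
    simpa [sq] using hker hf
  have hnormal : (φ f).conjTranspose * φ f = φ f * (φ f).conjTranspose := by
    simp only [hφf, Matrix.conjTranspose_sum, Matrix.conjTranspose_smul, hsym]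
    exact (Commute.sum_left _ _ _ fun i _ => Commute.sum_right _ _ _ fun j _ =>
      ((show Commute (D i) (D j) from hcomm i j).smul_left _).smul_right _).eq
  have hzero := coeff_eq_zero_of_sum_smul_eq_zero D h01 hDne hDsum c
    (hφf ▸ eq_zero_of_normal_of_mul_self hnormal hsq)
  simpa [hzero] using hc
end

section
/- Let D_0, ..., D_d be the adjacency matrices of an association scheme with d classes on X, with intersection numbers p_{ij}^k, and let I be the structure ideal. For every common zero z = (z_0, ..., z_d) ∈ ℂ^{d+1} of I there exists a nonzero vector v : X → ℂ such that D_i · v = z_i · v for every i ∈ {0, ..., d}. -/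
/-!
The adjacency matrices are orthogonal for the trace form: `tr (D i * D k) = 0` for `i ≠ k`, and
`t i := tr (D i * D i) ≠ 0`. Hence evaluating `tr (D i * D j * D k)` in two cyclic orders gives
`p i j k * t k = p j k i * t i`. For a common zero `z`, put `E = ∑ i, (z i / t i) • D i`.
This identity together with `z j * z k = ∑ i, p j k i * z i` gives `D j * E = z j • E`, and
`tr (E * D 0) = z 0 = 1` shows `E ≠ 0`, so any nonzero column of `E` is the required vector.
-/

/-- Matrices with entries in `{0, 1}` summing to the all-ones matrix have disjoint supports. -/
lemma zeroOne_mul_eq_zero_of_sum_eq_one {ι X : Type*} [Fintype ι] [DecidableEq ι]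
    (D : ι → Matrix X X ℂ) (h01 : ∀ i x y, D i x y = 0 ∨ D i x y = 1)
    (hDsum : (∑ i, D i) = Matrix.of (fun _ _ => (1 : ℂ)))
    {i k : ι} (hik : i ≠ k) (x y : X) : D i x y * D k x y = 0 := by
  have hs : ∑ l, (D l x y).re = 1 := by
    have h := congrFun (congrFun hDsum x) y
    rw [Matrix.sum_apply] at h
    simpa using congrArg Complex.re h
  have hle : ∑ l ∈ {i, k}, (D l x y).re ≤ ∑ l, (D l x y).re :=
    Finset.sum_le_sum_of_subset_of_nonneg (Finset.subset_univ _) (fun l _ _ => by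
      rcases h01 l x y with h | h <;> simp [h])
  rw [Finset.sum_pair hik, hs] at hle
  rcases h01 i x y with h | h
  · simp [h]
  · rcases h01 k x y with h' | h'
    · simp [h']
    · norm_num [h, h'] at hle

/-- Every common zero of the structure ideal of an association scheme is the tuple of
eigenvalues of the adjacency matrices on some common (nonzero) eigenvector. -/
theorem assocScheme_zero_of_structureIdeal_is_eigenvalue_tuple
    {X : Type*} [Fintype X] [Nonempty X] [DecidableEq X]
    {d : ℕ} (hd : 1 ≤ d)
    (D : Fin (d + 1) → Matrix X X ℂ)
    (p : Fin (d + 1) → Fin (d + 1) → Fin (d + 1) → ℕ)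
    (h01 : ∀ i x y, D i x y = 0 ∨ D i x y = 1)
    (hDne : ∀ i, D i ≠ 0)
    (hD0 : D 0 = 1)
    (hDsum : (∑ i, D i) = Matrix.of (fun _ _ => (1 : ℂ)))
    (hDsym : ∀ i, (D i).IsSymm)
    (hpsym : ∀ i j k, p i j k = p j i k)
    (hDmul : ∀ i j, D i * D j = ∑ k, (p i j k : ℂ) • D k)
    (I : Ideal (MvPolynomial (Fin (d + 1)) ℂ))
    (hI : I = Ideal.span
      ({MvPolynomial.X 0 - 1} ∪
       {f : MvPolynomial (Fin (d + 1)) ℂ | ∃ i j : Fin (d + 1), i ≤ j ∧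
          f = MvPolynomial.X i * MvPolynomial.X j -
            ∑ k, (p i j k : ℂ) • MvPolynomial.X k})) :
    ∀ z : Fin (d + 1) → ℂ, (∀ g ∈ I, MvPolynomial.eval z g = 0) →
      ∃ v : X → ℂ, v ≠ 0 ∧ ∀ i, (D i).mulVec v = z i • v := by
  intro z hz
  have hz0 : z 0 = 1 := by
    have h := hz (MvPolynomial.X 0 - 1) (hI ▸ Ideal.subset_span (Or.inl rfl))
    simpa [sub_eq_zero] using h
  have hzle : ∀ i j, i ≤ j → z i * z j = ∑ k, (p i j k : ℂ) * z k := by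
    intro i j hij
    have h := hz (MvPolynomial.X i * MvPolynomial.X j -
        ∑ k, (p i j k : ℂ) • MvPolynomial.X k)
      (hI ▸ Ideal.subset_span (Or.inr ⟨i, j, hij, rfl⟩))
    simpa [sub_eq_zero, MvPolynomial.smul_eval] using h
  have hzmul : ∀ i j, z i * z j = ∑ k, (p i j k : ℂ) * z k := by
    intro i j
    rcases le_total i j with h | h
    · exact hzle i j h
    · rw [mul_comm, hzle j i h]
      simp only [hpsym i j]
  have horth : ∀ i k, i ≠ k → (D i * D k).trace = 0 := by
    intro i k hik
    simp only [Matrix.trace, Matrix.diag_apply, Matrix.mul_apply]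
    refine Finset.sum_eq_zero fun x _ => Finset.sum_eq_zero fun y _ => ?_
    rw [(hDsym k).apply x y]
    exact zeroOne_mul_eq_zero_of_sum_eq_one D h01 hDsum hik x y
  have ht : ∀ i, (D i * D i).trace ≠ 0 := by
    intro i h
    have hH : (D i).conjTranspose = D i := by
      ext x y
      rw [Matrix.conjTranspose_apply, (hDsym i).apply x y]
      rcases h01 i x y with h | h <;> simp [h]
    open scoped ComplexOrder in
    refine hDne i (Matrix.trace_conjTranspose_mul_self_eq_zero_iff.mp ?_)
    rw [hH, h]
  have htr : ∀ (c : Fin (d + 1) → ℂ) k,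
      ((∑ i, c i • D i) * D k).trace = c k * (D k * D k).trace := by
    intro c k
    rw [Finset.sum_mul, Matrix.trace_sum, Finset.sum_eq_single k]
    · simp
    · intro i _ hik
      simp [horth i k hik]
    · simp
  have hcyc : ∀ i j k, (p i j k : ℂ) * (D k * D k).trace
      = (p j k i : ℂ) * (D i * D i).trace := by
    intro i j k
    rw [← htr (fun l => (p i j l : ℂ)) k, ← htr (fun l => (p j k l : ℂ)) i, ← hDmul, ← hDmul,
      Matrix.mul_assoc, Matrix.trace_mul_comm]
  set t : Fin (d + 1) → ℂ := fun i => (D i * D i).trace with htdef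
  set E : Matrix X X ℂ := ∑ i, (z i / t i) • D i with hE
  have hDE : ∀ j, D j * E = z j • E := by
    intro j
    rw [hE, Finset.mul_sum, Finset.smul_sum]
    simp only [Matrix.mul_smul, hDmul, Finset.smul_sum, smul_smul]
    rw [Finset.sum_comm]
    refine Finset.sum_congr rfl fun k _ => ?_
    rw [← Finset.sum_smul]
    congr 1
    rw [← mul_div_assoc, hzmul j k, Finset.sum_div]
    refine Finset.sum_congr rfl fun i _ => ?_
    have h : (p i j k : ℂ) * t k = (p j k i : ℂ) * t i := hcyc i j k
    have hi : t i ≠ 0 := ht i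
    have hk : t k ≠ 0 := ht k
    rw [hpsym j i k]
    field_simp
    linear_combination z i * h
  have hE0 : E ≠ 0 := by
    intro h0
    have h := htr (fun i => z i / t i) 0
    change (E * D 0).trace = z 0 / t 0 * t 0 at h
    rw [div_mul_cancel₀ _ (ht 0), h0, hz0] at h
    simp at h
  obtain ⟨y, hy⟩ : ∃ y, (fun x => E x y) ≠ 0 := by
    by_contra! h
    exact hE0 (Matrix.ext fun x y => congrFun (h y) x)
  refine ⟨fun x => E x y, hy, fun i => ?_⟩
  ext x
  exact congrFun (congrFun (hDE i) x) y
end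

section
/- Let D_0, ..., D_d be the adjacency matrices of an association scheme with d classes on X, with intersection numbers p_{ij}^k. If for some r ∈ {0, ..., d} the ℂ-subalgebra of Matrix X X ℂ generated by D_r contains every D_i (i.e. D_r generates the whole Bose–Mesner algebra), then D_r has exactly d + 1 distinct eigenvalues. -/
/-!
A Hermitian complex matrix `A` is diagonalisable, so its minimal polynomial is squarefree, and
its distinct eigenvalues, which are the roots of that polynomial, number `natDegree (minpoly ℂ A)`.
This degree is also the dimension of `ℂ[A] ≅ ℂ[X] / (minpoly ℂ A)`. For `A = D r` this algebra is
the Bose–Mesner algebra: the span of the `D i` is closed under multiplication and contains `1`, so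
it contains `ℂ[D r]`, and the generation hypothesis gives the reverse inclusion. Being nonzero
`0/1` matrices with pairwise disjoint supports, the `D i` are linearly independent, so the dimension
is `d + 1`.
-/

open Polynomial in
/-- The isomorphism `ℂ[A] ≅ ℂ[X] / (minpoly ℂ A)` computes the dimension of `ℂ[A]`. -/
lemma finrank_adjoin_singleton_eq_natDegree_minpoly {X : Type*} [Fintype X] [DecidableEq X]
    (A : Matrix X X ℂ) :
    Module.finrank ℂ (Algebra.adjoin ℂ {A}) = (minpoly ℂ A).natDegree := by
  rw [Algebra.adjoin_singleton_eq_range_aeval, ← finrank_quotient_span_eq_natDegree,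
    Ideal.span, ← minpoly.ker_aeval_eq_span_minpoly]
  exact (Ideal.quotientKerEquivRange (aeval (R := ℂ) A)).toLinearEquiv.finrank_eq.symm

/-- A Hermitian matrix acts on Euclidean space as a symmetric, hence semisimple, operator. -/
lemma squarefree_minpoly_of_isHermitian {X : Type*} [Fintype X] [DecidableEq X]
    {A : Matrix X X ℂ} (hA : A.IsHermitian) : Squarefree (minpoly ℂ A) := by
  have h := (Matrix.isSymmetric_toEuclideanLin_iff.mpr hA).isFinitelySemisimple
  rw [Module.End.isFinitelySemisimple_iff_isSemisimple] at h
  rw [← minpoly.algEquiv_eq (Matrix.toLpLinAlgEquiv 2) A]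
  exact h.minpoly_squarefree

/-- The eigenvalues of a matrix are the roots of its minimal polynomial. -/
lemma setOf_eigenvalues_eq_rootSet_minpoly {X : Type*} [Fintype X] [DecidableEq X]
    (A : Matrix X X ℂ) :
    {μ : ℂ | ∃ v : X → ℂ, v ≠ 0 ∧ A.mulVec v = μ • v} = (minpoly ℂ A).rootSet ℂ := by
  ext μ
  have h0 : minpoly ℂ A ≠ 0 := minpoly.ne_zero (Algebra.IsIntegral.isIntegral A)
  have h : (∃ v : X → ℂ, v ≠ 0 ∧ A.mulVec v = μ • v) ↔
      Module.End.HasEigenvalue (Matrix.toLinAlgEquiv' A) μ := by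
    constructor
    · rintro ⟨v, hv, hAv⟩
      exact Module.End.hasEigenvalue_of_hasEigenvector (x := v)
        ⟨Module.End.mem_eigenspace_iff.mpr hAv, hv⟩
    · intro h
      obtain ⟨v, hv⟩ := h.exists_hasEigenvector
      exact ⟨v, hv.2, hv.apply_eq_smul⟩
  rw [Set.mem_ofPred_eq, h, Module.End.hasEigenvalue_iff_isRoot, minpoly.algEquiv_eq,
    Polynomial.mem_rootSet_of_ne h0, Polynomial.IsRoot, Polynomial.coe_aeval_eq_eval]

/-- Applied to the `(x, y)` entries of `0/1` matrices with sum `J`, this says that their supports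
are pairwise disjoint. The sum counts the indices of value `1`, so there is exactly one. -/
lemma eq_zero_of_sum_eq_one {ι : Type*} [Fintype ι] [DecidableEq ι] {f : ι → ℂ}
    (h01 : ∀ i, f i = 0 ∨ f i = 1) (hsum : ∑ i, f i = 1) {i j : ι} (hi : f i = 1)
    (hij : j ≠ i) : f j = 0 := by
  have hf : ∀ k, f k = ((if f k = 1 then 1 else 0 : ℕ) : ℂ) := by
    intro k
    rcases h01 k with h | h <;> simp [h]
  have hs : ∑ k, (if f k = 1 then 1 else 0 : ℕ) = 1 := by
    have h : ((∑ k, (if f k = 1 then 1 else 0 : ℕ) : ℕ) : ℂ) = 1 := by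
      rw [Nat.cast_sum]
      exact (Finset.sum_congr rfl fun k _ => (hf k).symm).trans hsum
    exact_mod_cast h
  rw [Finset.sum_boole, Nat.cast_id, Finset.card_eq_one] at hs
  obtain ⟨a, ha⟩ := hs
  refine (h01 j).resolve_right fun hj => hij ?_
  have h1 : i ∈ ({a} : Finset ι) := ha ▸ by simp [hi]
  have h2 : j ∈ ({a} : Finset ι) := ha ▸ by simp [hj]
  rw [Finset.mem_singleton.mp h1, Finset.mem_singleton.mp h2]

/-- Evaluating a linear relation at an entry in the support of `D i` isolates its `i`-th
coefficient. -/
lemma linearIndependent_of_zero_one_of_sum_eq_ones {X ι : Type*} [Fintype ι] [DecidableEq ι]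
    {D : ι → Matrix X X ℂ} (h01 : ∀ i x y, D i x y = 0 ∨ D i x y = 1) (hDne : ∀ i, D i ≠ 0)
    (hDsum : (∑ i, D i) = Matrix.of (fun _ _ => (1 : ℂ))) : LinearIndependent ℂ D := by
  rw [Fintype.linearIndependent_iff]
  intro g hg i
  obtain ⟨x, y, hxy⟩ : ∃ x y, D i x y ≠ 0 := by
    by_contra! h
    exact hDne i (Matrix.ext h)
  have hone : D i x y = 1 := (h01 i x y).resolve_left hxy
  have hsum : ∑ k, D k x y = 1 := by
    have h := congrFun (congrFun hDsum x) y
    rwa [Matrix.sum_apply] at h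
  have h := congrFun (congrFun hg x) y
  rw [Matrix.sum_apply, Finset.sum_eq_single i] at h
  · simpa [hone] using h
  · intro j _ hj
    simp [eq_zero_of_sum_eq_one (fun k => h01 k x y) hsum hone hj]
  · simp

/-- A span of matrices that contains `1` and the products of its generators contains every
algebra generated by one of these generators; the reverse inclusion is `hgen`. -/
lemma adjoin_toSubmodule_eq_span {X ι : Type*} [Fintype X] [DecidableEq X] [Fintype ι]
    {D : ι → Matrix X X ℂ} {c : ι → ι → ι → ℂ} {o r : ι} (hD0 : D o = 1)
    (hDmul : ∀ i j, D i * D j = ∑ k, c i j k • D k)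
    (hgen : ∀ i, D i ∈ Algebra.adjoin ℂ {D r}) :
    (Algebra.adjoin ℂ {D r}).toSubmodule = Submodule.span ℂ (Set.range D) := by
  have hmem : ∀ i, D i ∈ Submodule.span ℂ (Set.range D) :=
    fun i => Submodule.subset_span ⟨i, rfl⟩
  apply le_antisymm
  · have hmul : ∀ x y, x ∈ Submodule.span ℂ (Set.range D) →
        y ∈ Submodule.span ℂ (Set.range D) → x * y ∈ Submodule.span ℂ (Set.range D) := by
      intro x y hx hy
      have hle : Submodule.span ℂ (Set.range D) * Submodule.span ℂ (Set.range D) ≤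
          Submodule.span ℂ (Set.range D) := by
        rw [Submodule.span_mul_span, Submodule.span_le]
        rintro _ ⟨_, ⟨i, rfl⟩, _, ⟨j, rfl⟩, rfl⟩
        change D i * D j ∈ Submodule.span ℂ (Set.range D)
        rw [hDmul]
        exact Submodule.sum_mem _ fun k _ => Submodule.smul_mem _ _ (hmem k)
      exact hle (Submodule.mul_mem_mul hx hy)
    have hle : Algebra.adjoin ℂ {D r} ≤
        (Submodule.span ℂ (Set.range D)).toSubalgebra (hD0 ▸ hmem o) hmul :=
      Algebra.adjoin_le (Set.singleton_subset_iff.mpr (hmem r))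
    exact fun x hx => hle hx
  · rw [Submodule.span_le]
    rintro _ ⟨i, rfl⟩
    exact hgen i


/-- If one adjacency matrix `D r` generates the whole Bose–Mesner algebra, then it
has exactly `d + 1` distinct eigenvalues. -/
theorem assocScheme_generator_has_d_add_one_eigenvalues
    {X : Type*} [Fintype X] [Nonempty X] [DecidableEq X]
    {d : ℕ} (hd : 1 ≤ d)
    (D : Fin (d + 1) → Matrix X X ℂ)
    (p : Fin (d + 1) → Fin (d + 1) → Fin (d + 1) → ℕ)
    (h01 : ∀ i x y, D i x y = 0 ∨ D i x y = 1)
    (hDne : ∀ i, D i ≠ 0)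
    (hD0 : D 0 = 1)
    (hDsum : (∑ i, D i) = Matrix.of (fun _ _ => (1 : ℂ)))
    (hDsym : ∀ i, (D i).IsSymm)
    (hpsym : ∀ i j k, p i j k = p j i k)
    (hDmul : ∀ i j, D i * D j = ∑ k, (p i j k : ℂ) • D k)
    (r : Fin (d + 1)) (hgen : ∀ i, D i ∈ Algebra.adjoin ℂ {D r}) :
    ({μ : ℂ | ∃ v : X → ℂ, v ≠ 0 ∧ (D r).mulVec v = μ • v}).Finite ∧
    ({μ : ℂ | ∃ v : X → ℂ, v ≠ 0 ∧ (D r).mulVec v = μ • v}).ncard = d + 1 := by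
  have hherm : (D r).IsHermitian := by
    ext x y
    rw [Matrix.conjTranspose_apply, (hDsym r).apply x y]
    rcases h01 r x y with h | h <;> simp [h]
  have hdeg : (minpoly ℂ (D r)).natDegree = d + 1 := by
    have hrank := finrank_span_eq_card
      (linearIndependent_of_zero_one_of_sum_eq_ones h01 hDne hDsum)
    rw [← adjoin_toSubmodule_eq_span hD0 hDmul hgen, Fintype.card_fin] at hrank
    rw [← finrank_adjoin_singleton_eq_natDegree_minpoly]
    exact hrank
  rw [setOf_eigenvalues_eq_rootSet_minpoly]
  refine ⟨Polynomial.rootSet_finite _ _, ?_⟩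
  rw [← hdeg, ← Nat.card_coe_set_eq, Nat.card_eq_fintype_card]
  exact Polynomial.card_rootSet_eq_natDegree
    (PerfectField.separable_iff_squarefree.mpr (squarefree_minpoly_of_isHermitian hherm))
    (IsAlgClosed.splits _)
end

section
/- Let D_0, ..., D_d be the adjacency matrices of an association scheme with d classes on X, with intersection numbers p_{ij}^k. Then there exist nonnegative integers c_0, ..., c_d such that the matrix A = Σ_{i=0}^d c_i · D_i generates the whole Bose–Mesner algebra, i.e. the ℂ-subalgebra of Matrix X X ℂ generated by A contains every D_i. -/
/-!
The matrices `D i` are real symmetric and commute, so `ℂ^X` is the sum of their joint eigenspaces.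
Only finitely many characters `χ` (tuples of eigenvalues) have a nonzero joint eigenspace. On the
joint eigenspace of `χ` the matrix `∑ j, c j • D j` acts by the scalar `∑ j, c j * χ j`. For
`c j = t ^ j` two distinct characters give the same scalar only when `t` is a root of a nonzero
polynomial, so some natural number `t` separates all of them. Lagrange interpolation then produces,
for every `i`, a polynomial taking the value `χ i` at the scalar of `χ`; evaluated at
`∑ j, c j • D j` it agrees with `D i` on each joint eigenspace, hence everywhere.
-/

/-- Finitely many vectors are separated by the linear form with coefficients the powers of a
suitable natural number: two of them collide only at a root of a nonzero polynomial. -/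
lemma exists_nat_pow_injOn {n : ℕ} {S : Set (Fin n → ℂ)} (hS : S.Finite) :
    ∃ t : ℕ, Set.InjOn (fun χ : Fin n → ℂ => ∑ j : Fin n, ((t ^ (j : ℕ) : ℕ) : ℂ) * χ j) S := by
  classical
  let P : (Fin n → ℂ) × (Fin n → ℂ) → Polynomial ℂ := fun a =>
    ∑ j, Polynomial.C (a.1 j - a.2 j) * Polynomial.X ^ (j : ℕ)
  have hfin : (⋃ a ∈ S ×ˢ S, ((P a).roots.toFinset : Set ℂ)).Finite :=
    (hS.prod hS).biUnion fun a _ => Finset.finite_toSet _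
  obtain ⟨t, ht⟩ := (hfin.preimage (f := fun t : ℕ => (t : ℂ))
    Nat.cast_injective.injOn).infinite_compl.nonempty
  refine ⟨t, fun χ hχ ψ hψ h => ?_⟩
  by_contra hne
  obtain ⟨k, hk⟩ := Function.ne_iff.mp hne
  have hP : P (χ, ψ) ≠ 0 := fun h0 => hk <| by
    have := congrArg (fun q => q.coeff (k : ℕ)) h0
    simpa [P, Polynomial.finsetSum_coeff, Polynomial.coeff_C_mul, Polynomial.coeff_X_pow,
      Fin.val_inj, sub_eq_zero, -map_sub]
      using this
  refine ht (Set.mem_biUnion (Set.mk_mem_prod hχ hψ) ?_)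
  have hroot : (P (χ, ψ)).eval (t : ℂ) = 0 := by
    simp only [P, Polynomial.eval_finsetSum, Polynomial.eval_mul, Polynomial.eval_C,
      Polynomial.eval_pow, Polynomial.eval_X, sub_mul, Finset.sum_sub_distrib, sub_eq_zero]
    simpa [mul_comm] using h
  simpa [hP] using hroot

/-- A commuting family of symmetric operators lies in the algebra generated by a single
combination of its members with natural number coefficients. -/
lemma exists_nat_generator_of_commute {E : Type*} [NormedAddCommGroup E] [InnerProductSpace ℂ E]
    [FiniteDimensional ℂ E] {n : ℕ} (T : Fin n → Module.End ℂ E) (hT : ∀ i, (T i).IsSymmetric)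
    (hC : ∀ i j, Commute (T i) (T j)) :
    ∃ c : Fin n → ℕ, ∀ i, ∃ q : Polynomial ℂ,
      Polynomial.aeval (∑ j, (c j : ℂ) • T j) q = T i := by
  classical
  let V : (Fin n → ℂ) → Submodule ℂ E := fun χ => ⨅ j, Module.End.eigenspace (T j) (χ j)
  have hfin : {χ | V χ ≠ ⊥}.Finite := WellFoundedGT.finite_ne_bot_of_iSupIndep
    (LinearMap.IsSymmetric.orthogonalFamily_iInf_eigenspaces hT).independent
  obtain ⟨t, ht⟩ := exists_nat_pow_injOn hfin
  refine ⟨fun j => t ^ (j : ℕ), fun i => ?_⟩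
  set ℓ : (Fin n → ℂ) → ℂ := fun χ => ∑ j : Fin n, ((t ^ (j : ℕ) : ℕ) : ℂ) * χ j
  set A : Module.End ℂ E := ∑ j : Fin n, ((t ^ (j : ℕ) : ℕ) : ℂ) • T j
  let q := Lagrange.interpolate hfin.toFinset ℓ (fun χ => χ i)
  refine ⟨q, ?_⟩
  have htop : ⨆ χ, V χ = ⊤ :=
    LinearMap.IsSymmetric.iSup_iInf_eq_top_of_commute hT fun i j _ => hC i j
  suffices h : (⨆ χ, V χ) ≤ LinearMap.eqLocus (Polynomial.aeval A q) (T i) by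
    ext v
    exact h (htop ▸ Submodule.mem_top)
  refine iSup_le fun χ v hv => ?_
  have hTv : ∀ j, T j v = χ j • v := fun j =>
    Module.End.mem_eigenspace_iff.mp ((Submodule.mem_iInf _).mp hv j)
  by_cases hχ : V χ = ⊥
  · rw [hχ, Submodule.mem_bot] at hv
    simp [hv]
  have hAv : A v = ℓ χ • v := by
    simp [A, ℓ, LinearMap.sum_apply, hTv, Finset.sum_smul, mul_smul]
  have hq : q.eval (ℓ χ) = χ i :=
    Lagrange.eval_interpolate_at_node _ (by simpa using ht) (by simpa using hχ)
  rw [LinearMap.mem_eqLocus, Module.End.aeval_apply_of_mem_apply_eq_smul hAv, hq, hTv]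

/-- There is a nonnegative-integer combination `A = ∑ i, c i • D i` of the adjacency
matrices that generates the whole Bose–Mesner algebra. -/
theorem assocScheme_exists_nonneg_integer_generator
    {X : Type*} [Fintype X] [Nonempty X] [DecidableEq X]
    {d : ℕ} (hd : 1 ≤ d)
    (D : Fin (d + 1) → Matrix X X ℂ)
    (p : Fin (d + 1) → Fin (d + 1) → Fin (d + 1) → ℕ)
    (h01 : ∀ i x y, D i x y = 0 ∨ D i x y = 1)
    (hDne : ∀ i, D i ≠ 0)
    (hD0 : D 0 = 1)
    (hDsum : (∑ i, D i) = Matrix.of (fun _ _ => (1 : ℂ)))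
    (hDsym : ∀ i, (D i).IsSymm)
    (hpsym : ∀ i j k, p i j k = p j i k)
    (hDmul : ∀ i j, D i * D j = ∑ k, (p i j k : ℂ) • D k) :
    ∃ c : Fin (d + 1) → ℕ,
      ∀ i, D i ∈ Algebra.adjoin ℂ {∑ j, (c j : ℂ) • D j} := by
  have hherm : ∀ i, (D i).IsHermitian := fun i => Matrix.IsHermitian.ext fun x y => by
    rw [(hDsym i).apply x y]
    rcases h01 i x y with h | h <;> simp [h]
  have hcomm : ∀ i j, Commute (D i) (D j) := fun i j => by
    rw [Commute, SemiconjBy, hDmul, hDmul]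
    simp only [hpsym i j]
  let e : Matrix X X ℂ ≃ₐ[ℂ] Module.End ℂ (EuclideanSpace ℂ X) := Matrix.toLpLinAlgEquiv 2
  obtain ⟨c, hc⟩ := exists_nat_generator_of_commute (fun i => e (D i))
    (fun i => Matrix.isSymmetric_toEuclideanLin_iff.mpr (hherm i))
    (fun i j => (hcomm i j).map e)
  refine ⟨c, fun i => ?_⟩
  obtain ⟨q, hq⟩ := hc i
  have hDi : Polynomial.aeval (∑ j, (c j : ℂ) • D j) q = D i := by
    apply e.injective
    rw [← hq, ← AlgEquiv.coe_toAlgHom, ← Polynomial.aeval_algHom_apply]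
    simp
  rw [← hDi]
  exact Polynomial.aeval_mem_adjoin_singleton ℂ _
end
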